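/- arXiv:1410.8229 — 2 statements merged into one kernel-verified Lean document; each statement's English description precedes it below -/
import Mathlib

section
/- Let m, n, k be positive integers, A ∈ ℝ^{m×n}, and μ ∈ (0,1). Suppose that for every k-sparse x ∈ ℝⁿ and every z ∈ ℝⁿ with Az = Ax, one has μ‖x‖₁ + (1−μ)‖x‖₂² ≤ μ‖z‖₁ + (1−μ)‖z‖₂². Then for every h in the null space of A and every index set Λ ⊆ {1,…,n} with |Λ| ≤ k, one has ‖h_Λ‖₂ ≤ ‖h_{Λᶜ}‖₂, where h_Λ denotes the vector that agrees with h on Λ and is zero outside Λ, and Λᶜ is the complement of Λ. -/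
/-- The ℓ¹-norm of a vector in ℝⁿ. -/
noncomputable def l1 {n : ℕ} (x : Fin n → ℝ) : ℝ := ∑ i, |x i|

/-- The ℓ²-norm of a vector in ℝⁿ. -/
noncomputable def l2 {n : ℕ} (x : Fin n → ℝ) : ℝ := Real.sqrt (∑ i, (x i) ^ 2)

/-- The ℓᵖ-norm of a vector in ℝⁿ. -/
noncomputable def lpNorm {n : ℕ} (p : ℝ) (x : Fin n → ℝ) : ℝ := (∑ i, |x i| ^ p) ^ (1 / p)

/-- A vector is `k`-sparse if it has at most `k` nonzero components. -/
def IsSparse {n : ℕ} (k : ℕ) (x : Fin n → ℝ) : Prop :=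
  (Finset.univ.filter (fun i => x i ≠ 0)).card ≤ k

/-- The `k`-sparsity index of `x` with respect to the ℓ¹-norm. -/
noncomputable def sigma1 {n : ℕ} (k : ℕ) (x : Fin n → ℝ) : ℝ :=
  sInf ((fun z => l1 (x - z)) '' {z | IsSparse k z})

/-- The `k`-sparsity index of `x` with respect to the ℓ²-norm. -/
noncomputable def sigma2 {n : ℕ} (k : ℕ) (x : Fin n → ℝ) : ℝ :=
  sInf ((fun z => l2 (x - z)) '' {z | IsSparse k z})

/-- The vector agreeing with `x` on `S` and zero elsewhere. -/
def proj {n : ℕ} (S : Finset (Fin n)) (x : Fin n → ℝ) : Fin n → ℝ :=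
  fun i => if i ∈ S then x i else 0

/-- `G` is a partition of `{1,…,n}` into `g` disjoint nonempty subsets. -/
def IsPartition {n g : ℕ} (G : Fin g → Finset (Fin n)) : Prop :=
  (∀ i, (G i).Nonempty) ∧ (∀ i j, i ≠ j → Disjoint (G i) (G j)) ∧
    (∀ x : Fin n, ∃ i, x ∈ G i)

/-- The Sparse Group LASSO norm associated to the partition `G` with parameter `μ`. -/
noncomputable def sglNorm {n g : ℕ} (G : Fin g → Finset (Fin n)) (μ : ℝ) (z : Fin n → ℝ) : ℝ :=
  ∑ i, ((1 - μ) * l1 (proj (G i) z) + μ * l2 (proj (G i) z))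

/-- `A` satisfies the Restricted Isometry Property of order `k` with constant `δ`. -/
def RIP {m n : ℕ} (A : Matrix (Fin m) (Fin n) ℝ) (k : ℕ) (δ : ℝ) : Prop :=
  ∀ u : Fin n → ℝ, IsSparse k u →
    (1 - δ) * (l2 u) ^ 2 ≤ (l2 (A.mulVec u)) ^ 2 ∧
      (l2 (A.mulVec u)) ^ 2 ≤ (1 + δ) * (l2 u) ^ 2

/-- `A` satisfies the ℓ₂ robust null space property of order `k` with constants `ρ`, `τ`. -/
def RNSP {m n : ℕ} (A : Matrix (Fin m) (Fin n) ℝ) (k : ℕ) (ρ τ : ℝ) : Prop :=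
  ∀ h : Fin n → ℝ, ∀ S : Finset (Fin n), S.card ≤ k →
    l2 (proj S h) ≤ (ρ / Real.sqrt k) * l1 (proj Sᶜ h) +
      (τ / Real.sqrt k) * l2 (A.mulVec h)

theorem aux_l1 {n : ℕ} (t : ℝ) (ht : 0 ≤ t) (x : Fin n → ℝ) : l1 (t • x) = t * l1 x := by
  simp [l1, abs_mul, abs_of_nonneg ht, Finset.mul_sum]

theorem aux_l2 {n : ℕ} (x : Fin n → ℝ) : (l2 x) ^ 2 = ∑ i, (x i) ^ 2 :=
  Real.sq_sqrt (Finset.sum_nonneg fun i _ => sq_nonneg _)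

theorem aux_l2s {n : ℕ} (t : ℝ) (x : Fin n → ℝ) : (l2 (t • x)) ^ 2 = t ^ 2 * (l2 x) ^ 2 := by
  simp [aux_l2, mul_pow, Finset.mul_sum]

theorem aux_split {n : ℕ} (S : Finset (Fin n)) (h : Fin n → ℝ) : proj S h + proj Sᶜ h = h := by
  funext i
  by_cases hi : i ∈ S <;> simp [proj, hi]

/-- If every `k`-sparse vector minimizes the Elastic Net regularizer over its
own fiber of `A`, then for every `h` in the null space of `A` and every index set `Λ` with
at most `k` elements, `‖h_Λ‖₂ ≤ ‖h_{Λᶜ}‖₂`. -/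
theorem stmt1 (m n k : ℕ) (hm : 0 < m) (hn : 0 < n) (hk : 0 < k)
    (A : Matrix (Fin m) (Fin n) ℝ) (μ : ℝ) (hμ : μ ∈ Set.Ioo (0 : ℝ) 1)
    (hmin : ∀ x : Fin n → ℝ, IsSparse k x → ∀ z : Fin n → ℝ, A.mulVec z = A.mulVec x →
      μ * l1 x + (1 - μ) * (l2 x) ^ 2 ≤ μ * l1 z + (1 - μ) * (l2 z) ^ 2) :
    ∀ h : Fin n → ℝ, A.mulVec h = 0 → ∀ Λ : Finset (Fin n), Λ.card ≤ k →
      l2 (proj Λ h) ≤ l2 (proj Λᶜ h) := by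
  intro h hh S hS
  obtain ⟨h0, h1⟩ := hμ
  have hneg1 : l1 (-proj Sᶜ h) = l1 (proj Sᶜ h) := by simp [l1]
  have hneg2 : l2 (-proj Sᶜ h) = l2 (proj Sᶜ h) := by simp [l2]
  have key : ∀ t : ℝ, 0 < t → μ * (t * l1 (proj S h)) + (1 - μ) * (t ^ 2 * (l2 (proj S h)) ^ 2)
      ≤ μ * (t * l1 (proj Sᶜ h)) + (1 - μ) * (t ^ 2 * (l2 (proj Sᶜ h)) ^ 2) := by
    intro t ht
    have hsp : IsSparse k (t • proj S h) := by
      refine le_trans (Finset.card_le_card ?_) hS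
      intro i hi
      by_contra hc
      simp [proj, hc] at hi
    have hA : A.mulVec (t • -proj Sᶜ h) = A.mulVec (t • proj S h) := by
      have h2 : A.mulVec (proj S h) + A.mulVec (proj Sᶜ h) = 0 := by
        rw [← Matrix.mulVec_add, aux_split, hh]
      rw [Matrix.mulVec_smul, Matrix.mulVec_smul, Matrix.mulVec_neg, eq_neg_of_add_eq_zero_left h2]
    have := hmin _ hsp _ hA
    rwa [aux_l1 t ht.le, aux_l1 t ht.le, aux_l2s, aux_l2s, hneg1, hneg2] at this
  by_contra hlt
  push Not at hlt
  have hd : (l2 (proj Sᶜ h)) ^ 2 < (l2 (proj S h)) ^ 2 :=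
    pow_lt_pow_left₀ hlt (Real.sqrt_nonneg _) (by norm_num)
  generalize l2 (proj Sᶜ h) ^ 2 = d at *
  generalize l2 (proj S h) ^ 2 = b at *
  generalize l1 (proj Sᶜ h) = c at *
  generalize l1 (proj S h) = a at *
  have hD : 0 < (1 - μ) * (b - d) := mul_pos (by linarith) (by linarith)
  have hN : 0 < |μ * (c - a)| + 1 := by positivity
  have ht := div_pos hN hD
  have hk2 := key _ ht
  have he := div_mul_cancel₀ (|μ * (c - a)| + 1) hD.ne'
  generalize (|μ * (c - a)| + 1) / ((1 - μ) * (b - d)) = t at *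
  have h3 : t * (t * ((1 - μ) * (b - d))) ≤ t * (μ * (c - a)) := by linarith
  have h4 := le_of_mul_le_mul_left h3 ht
  have h5 := le_abs_self (μ * (c - a))
  linarith
end

section
/- Let t > 1 be such that tk is a positive integer, and suppose A ∈ ℝ^{m×n} satisfies the Restricted Isometry Property of order tk with constant δ := δ_{tk} < √((t−1)/t). Define ν := √(t(t−1)) − (t−1), a := [ν(1−ν) − δ(0.5 − ν + ν²)]^{1/2}, b := ν(1−ν)√(1+δ), and c := [δν²/(2(t−1))]^{1/2}. Then A satisfies the ℓ₂ robust null space property of order k with constants ρ = c/a < 1 and τ = b√k/a²; that is, for every h ∈ ℝⁿ and every set S ⊆ {1,…,n} with |S| ≤ k, ‖h_S‖₂ ≤ (ρ/√k)‖h_{Sᶜ}‖₁ + (τ/√k)‖Ah‖₂. -/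
open Finset in
theorem aux_top {ι : Type*} [DecidableEq ι] (T : Finset ι) (w : ι → ℝ) (s : ℕ) :
    ∃ B ⊆ T, ∃ θ : ℝ, 0 ≤ θ ∧ B.card ≤ s ∧ (∀ i ∈ B, θ ≤ |w i|) ∧
      (∀ i ∈ T \ B, |w i| ≤ θ) ∧ θ * B.card = θ * s := by
  induction s with
  | zero =>
    refine ⟨∅, by simp, ∑ i ∈ T, |w i|, sum_nonneg (fun _ _ => abs_nonneg _), by simp, by simp, ?_,
      by simp⟩
    intro i hi
    simp only [sdiff_empty] at hi
    exact single_le_sum (f := fun i => |w i|) (fun _ _ => abs_nonneg _) hi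
  | succ s ih =>
    obtain ⟨B, hBT, θ, hθ, hc, h1, h2, h3⟩ := ih
    by_cases hne : (T \ B).Nonempty
    · obtain ⟨j, hj, hmax⟩ := exists_max_image (T \ B) (fun i => |w i|) hne
      have hj' := mem_sdiff.1 hj
      refine ⟨insert j B, insert_subset hj'.1 hBT, |w j|, abs_nonneg _, ?_, ?_, ?_, ?_⟩
      · rw [card_insert_of_notMem hj'.2]; omega
      · intro i hi
        rcases mem_insert.1 hi with rfl | hi
        · exact le_rfl
        · exact (h2 j hj).trans (h1 i hi)
      · intro i hi
        apply hmax
        simp only [mem_sdiff, mem_insert, not_or] at hi ⊢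
        exact ⟨hi.1, hi.2.2⟩
      · rw [card_insert_of_notMem hj'.2]
        push_cast
        by_cases h0 : θ = 0
        · have := h2 j hj
          have h00 : |w j| = 0 := le_antisymm (h0 ▸ this) (abs_nonneg _)
          rw [h00]; ring
        · have := mul_left_cancel₀ h0 h3
          rw [this]
    · rw [not_nonempty_iff_eq_empty] at hne
      refine ⟨B, hBT, 0, le_rfl, by omega, fun _ _ => abs_nonneg _, ?_, by simp⟩
      rw [hne]; simp

open Finset in
theorem aux_lin {n : ℕ} (T : Finset (Fin n)) (w v : Fin n → ℝ) (s : ℕ) (α : ℝ) (hα : 0 ≤ α)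
    (hv : ∀ i ∈ T, |v i| ≤ α) (hs : ∑ i ∈ T, |v i| ≤ s * α) :
    ∃ B ⊆ T, B.card ≤ s ∧ ∃ u : Fin n → ℝ, (∀ i, i ∉ B → u i = 0) ∧ (∀ i, |u i| ≤ α) ∧
      ∑ i ∈ T, w i * v i ≤ ∑ i, w i * u i := by
  obtain ⟨B, hBT, θ, hθ, hc, h1, h2, h3⟩ := aux_top T w s
  refine ⟨B, hBT, hc, fun i => if i ∈ B then (if 0 ≤ w i then α else -α) else 0, ?_, ?_, ?_⟩
  · intro i hi; simp [hi]
  · intro i; dsimp only; split_ifs <;> simp [abs_of_nonneg hα, hα]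
  · have e : ∑ i, w i * (if i ∈ B then (if 0 ≤ w i then α else -α) else 0)
        = ∑ i ∈ B, |w i| * α := by
      simp only [mul_ite, mul_zero]
      rw [sum_ite_mem, univ_inter]
      apply sum_congr rfl
      intro i _
      split_ifs with h
      · rw [abs_of_nonneg h]
      · rw [abs_of_neg (not_le.1 h)]; ring
    rw [e]
    have e1 : ∑ i ∈ T, w i * v i ≤ ∑ i ∈ T, |w i| * |v i| :=
      sum_le_sum fun i _ => by rw [← abs_mul]; exact le_abs_self _
    have e2 := sum_sdiff (f := fun i => |w i| * |v i|) hBT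
    have e3 := sum_sdiff (f := fun i => |v i|) hBT
    have e4 : ∑ i ∈ T \ B, |w i| * |v i| ≤ θ * ∑ i ∈ T \ B, |v i| := by
      rw [mul_sum]
      exact sum_le_sum fun i hi => mul_le_mul_of_nonneg_right (h2 i hi) (abs_nonneg _)
    have e5 : ∑ i ∈ B, θ * (α - |v i|) ≤ ∑ i ∈ B, |w i| * (α - |v i|) :=
      sum_le_sum fun i hi => mul_le_mul_of_nonneg_right (h1 i hi)
        (sub_nonneg.2 (hv i (hBT hi)))
    simp only [mul_sub, sum_sub_distrib, sum_const, nsmul_eq_mul, ← mul_sum] at e5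
    have e6 : (B.card : ℝ) * (θ * α) = θ * (s * α) := by
      linear_combination α * h3
    have e7 : θ * ∑ i ∈ T \ B, |v i| ≤ θ * (s * α - ∑ i ∈ B, |v i|) :=
      mul_le_mul_of_nonneg_left (by linarith) hθ
    linarith

theorem l2_sq {n : ℕ} (x : Fin n → ℝ) : l2 x ^ 2 = x ⬝ᵥ x := by
  unfold l2
  rw [Real.sq_sqrt (Finset.sum_nonneg fun _ _ => sq_nonneg _)]
  simp [dotProduct, sq]

theorem l2_nonneg {n : ℕ} (x : Fin n → ℝ) : 0 ≤ l2 x := Real.sqrt_nonneg _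

theorem dot_le {n : ℕ} (x y : Fin n → ℝ) : x ⬝ᵥ y ≤ l2 x * l2 y := by
  unfold l2 dotProduct
  exact Real.sum_mul_le_sqrt_mul_sqrt _ _ _

theorem sparse_of {n : ℕ} (x : Fin n → ℝ) (S : Finset (Fin n)) (k : ℕ) (hS : S.card ≤ k)
    (h : ∀ i, i ∉ S → x i = 0) : IsSparse k x := by
  refine (Finset.card_le_card ?_).trans hS
  intro i hi
  by_contra hn
  exact (Finset.mem_filter.1 hi).2 (h i hn)

open Finset in
theorem core {m n : ℕ} (k d : ℕ) (hd : 0 < d)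
    (A : Matrix (Fin m) (Fin n) ℝ) (δ ν : ℝ) (hδ0 : 0 ≤ δ) (hν0 : 0 ≤ ν) (hν1 : ν ≤ 1)
    (hRIP : RIP A (k + d) δ) (h : Fin n → ℝ) (S : Finset (Fin n)) (hS : S.card ≤ k) :
    ∃ X : ℝ, l2 (proj S h) ≤ X ∧
      (ν * (1 - ν) - δ * (1/2 - ν + ν ^ 2)) * X ^ 2 ≤
        δ * ν ^ 2 / 2 * (l1 (proj Sᶜ h) ^ 2 / d) +
        ν * (1 - ν) * Real.sqrt (1 + δ) * l2 (A.mulVec h) * X := by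
  have hd' : (0 : ℝ) < d := by exact_mod_cast hd
  have hL : l1 (proj Sᶜ h) = ∑ i ∈ Sᶜ, |h i| := by
    unfold l1 proj
    rw [← univ_inter Sᶜ, ← sum_ite_mem]
    apply sum_congr rfl
    intro i _
    simp only [univ_inter]
    split_ifs <;> simp
  rw [hL]
  set L := ∑ i ∈ Sᶜ, |h i| with hLdef
  have hL0 : 0 ≤ L := sum_nonneg fun _ _ => abs_nonneg _
  set α := L / d with hαdef
  have hα : 0 ≤ α := by positivity
  have hLα : L = d * α := by rw [hαdef]; field_simp
  set M := (Sᶜ).filter (fun i => α < |h i|) with hM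
  have hMS : M ⊆ Sᶜ := filter_subset _ _
  set T := Sᶜ \ M with hT
  have hsum : ∑ i ∈ T, |h i| + ∑ i ∈ M, |h i| = L := sum_sdiff hMS
  have hMα : M.card * α ≤ ∑ i ∈ M, |h i| := by
    rw [← nsmul_eq_mul]
    exact card_nsmul_le_sum _ _ _ fun i hi => (mem_filter.1 hi).2.le
  have hMd : M.card ≤ d := by
    rcases hα.eq_or_lt with h0 | h0
    · have : M = ∅ := by
        apply eq_empty_of_forall_notMem
        intro i hi
        have h1 : |h i| ≤ L :=
          single_le_sum (f := fun i => |h i|) (fun _ _ => abs_nonneg _) (hMS hi)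
        have h2 := (mem_filter.1 hi).2
        rw [hLα, ← h0] at h1
        rw [← h0] at h2
        linarith
      simp [this]
    · have h1 : ∑ i ∈ M, |h i| ≤ L := by
        have : 0 ≤ ∑ i ∈ T, |h i| := sum_nonneg fun _ _ => abs_nonneg _
        linarith
      have : (M.card : ℝ) * α ≤ d * α := by linarith
      exact_mod_cast le_of_mul_le_mul_right this h0
  set x := proj (S ∪ M) h with hx
  set v := proj T h with hv
  have hxv : x + v = h := by
    funext i
    simp only [hx, hv, proj, Pi.add_apply, hT, mem_sdiff, mem_union, mem_compl]
    by_cases h1 : i ∈ S <;> by_cases h2 : i ∈ M <;> simp [h1, h2]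
  set w : Fin n → ℝ := fun i => - (Matrix.vecMul (A.mulVec x) A) i with hw
  obtain ⟨B, hBT, hBc, u, hu0, huα, hwu⟩ := aux_lin T w h (d - M.card) α hα
    (by
      intro i hi
      by_contra hcon
      have := mem_sdiff.1 hi
      exact this.2 (mem_filter.2 ⟨this.1, not_le.1 hcon⟩))
    (by
      rw [Nat.cast_sub hMd, sub_mul]
      linarith)
  have hkey : A.mulVec x ⬝ᵥ A.mulVec u ≤ A.mulVec x ⬝ᵥ A.mulVec v := by
    rw [Matrix.dotProduct_mulVec, Matrix.dotProduct_mulVec]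
    have e1 : ∑ i, w i * u i = - (Matrix.vecMul (A.mulVec x) A ⬝ᵥ u) := by
      simp [hw, dotProduct]
    have e2 : ∑ i ∈ T, w i * h i = - (Matrix.vecMul (A.mulVec x) A ⬝ᵥ v) := by
      simp only [hw, dotProduct, hv, proj, mul_ite, mul_zero]
      rw [sum_ite_mem, univ_inter, ← sum_neg_distrib]
      simp
    linarith
  have hBx : ∀ i ∈ B, x i = 0 := by
    intro i hi
    have := hBT hi
    simp only [hT, mem_sdiff, mem_compl] at this
    simp [hx, proj, this.1, this.2]
  have hxu : x ⬝ᵥ u = 0 := by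
    unfold dotProduct
    apply sum_eq_zero
    intro i _
    by_cases hi : i ∈ B
    · simp [hBx i hi]
    · simp [hu0 i hi]
  have huu : u ⬝ᵥ u ≤ L ^ 2 / d := by
    have e : u ⬝ᵥ u = ∑ i ∈ B, u i * u i := by
      unfold dotProduct
      symm
      apply sum_subset (subset_univ _)
      intro i _ hi
      simp [hu0 i hi]
    have e2 : ∑ i ∈ B, u i * u i ≤ B.card • (α ^ 2) := by
      apply sum_le_card_nsmul
      intro i _
      have := huα i
      rw [← abs_mul_abs_self, ← sq]
      exact pow_le_pow_left₀ (abs_nonneg _) this 2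
    rw [nsmul_eq_mul] at e2
    have e3 : (B.card : ℝ) ≤ d := by exact_mod_cast (by omega : B.card ≤ d)
    have e4 : (B.card : ℝ) * α ^ 2 ≤ d * α ^ 2 := by gcongr
    have e5 : (d : ℝ) * α ^ 2 = L ^ 2 / d := by rw [hαdef]; field_simp
    linarith
  have hsp : ∀ p q : ℝ, IsSparse (k + d) (p • x + q • u) := by
    intro p q
    apply sparse_of _ (S ∪ M ∪ B)
    · have := card_union_le (S ∪ M) B
      have := card_union_le S M
      omega
    · intro i hi
      have h1 : i ∉ S ∪ M := fun hh => hi (mem_union_left _ hh)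
      have h2 : i ∉ B := fun hh => hi (mem_union_right _ hh)
      simp [hu0 i h2, hx, proj, -mem_union, h1]
  have hA : ∀ p q : ℝ, l2 (A.mulVec (p • x + q • u)) ^ 2 =
      p ^ 2 * (A.mulVec x ⬝ᵥ A.mulVec x) + 2 * p * q * (A.mulVec x ⬝ᵥ A.mulVec u)
        + q ^ 2 * (A.mulVec u ⬝ᵥ A.mulVec u) := by
    intro p q
    rw [l2_sq, Matrix.mulVec_add, Matrix.mulVec_smul, Matrix.mulVec_smul]
    simp only [dotProduct_add, add_dotProduct, smul_dotProduct, dotProduct_smul, smul_eq_mul]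
    rw [dotProduct_comm (A.mulVec u) (A.mulVec x)]
    ring
  have hN : ∀ p q : ℝ, l2 (p • x + q • u) ^ 2 = p ^ 2 * (x ⬝ᵥ x) + q ^ 2 * (u ⬝ᵥ u) := by
    intro p q
    rw [l2_sq]
    simp only [dotProduct_add, add_dotProduct, smul_dotProduct, dotProduct_smul, smul_eq_mul]
    rw [dotProduct_comm u x, hxu]
    ring
  have r1 := (hRIP _ (hsp 1 ν)).1
  have r2 := (hRIP _ (hsp (1/2 - ν) (-ν/2))).2
  have r3 := (hRIP _ (hsp 1 0)).2
  rw [hA, hN] at r1 r2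
  simp only [one_smul, zero_smul, add_zero] at r3
  refine ⟨l2 x, ?_, ?_⟩
  · unfold l2
    apply Real.sqrt_le_sqrt
    apply sum_le_sum
    intro i _
    simp only [hx, proj, mem_union]
    by_cases h1 : i ∈ S
    · simp [h1]
    · simp only [h1, if_false, false_or]; rw [zero_pow two_ne_zero]; exact sq_nonneg _
  · have hAx : l2 (A.mulVec x) ≤ Real.sqrt (1 + δ) * l2 x := by
      refine (fun hh h0 => (abs_le_of_sq_le_sq' hh h0).2) ?_ (mul_nonneg (Real.sqrt_nonneg _) (l2_nonneg x))
      rw [mul_pow, Real.sq_sqrt (by linarith)]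
      exact r3
    have hc : A.mulVec x ⬝ᵥ A.mulVec h ≤ Real.sqrt (1 + δ) * l2 x * l2 (A.mulVec h) :=
      (dot_le _ _).trans (mul_le_mul_of_nonneg_right hAx (l2_nonneg _))
    have hAv : A.mulVec x ⬝ᵥ A.mulVec h = A.mulVec x ⬝ᵥ A.mulVec x + A.mulVec x ⬝ᵥ A.mulVec v := by
      rw [← dotProduct_add, ← Matrix.mulVec_add, hxv]
    have hνν : 0 ≤ ν * (1 - ν) := mul_nonneg hν0 (by linarith)
    have k1 := mul_le_mul_of_nonneg_left hc hνν
    have k2 := mul_le_mul_of_nonneg_left hkey hνν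
    have k3 := mul_le_mul_of_nonneg_left huu (show 0 ≤ δ * ν ^ 2 / 2 by positivity)
    rw [hAv] at k1
    rw [l2_sq x]
    rw [hAv] at hc
    generalize A.mulVec x ⬝ᵥ A.mulVec x = XX at *
    generalize A.mulVec x ⬝ᵥ A.mulVec u = XU at *
    generalize A.mulVec x ⬝ᵥ A.mulVec v = XV at *
    generalize A.mulVec u ⬝ᵥ A.mulVec u = UU at *
    generalize x ⬝ᵥ x = xx at *
    generalize u ⬝ᵥ u = uu at *
    nlinarith [r1, r2, k1, k2, k3]

/-- RIP of order `tk` with constant `δ < √((t−1)/t)` implies the ℓ₂ robust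
null space property of order `k` with the stated constants. -/
theorem stmt6 (m n k tk : ℕ) (hk : 0 < k) (t : ℝ) (ht : 1 < t) (htk : 0 < tk)
    (htkeq : (tk : ℝ) = t * k)
    (A : Matrix (Fin m) (Fin n) ℝ) (δ : ℝ) (hδ0 : 0 ≤ δ)
    (hRIP : RIP A tk δ) (hδ : δ < Real.sqrt ((t - 1) / t))
    (ν a b c ρ τ : ℝ)
    (hν : ν = Real.sqrt (t * (t - 1)) - (t - 1))
    (ha : a = Real.sqrt (ν * (1 - ν) - δ * (0.5 - ν + ν ^ 2)))
    (hb : b = ν * (1 - ν) * Real.sqrt (1 + δ))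
    (hc : c = Real.sqrt (δ * ν ^ 2 / (2 * (t - 1))))
    (hρ : ρ = c / a) (hτ : τ = b * Real.sqrt k / a ^ 2) :
    ρ < 1 ∧ RNSP A k ρ τ := by 
  have hk' : (0 : ℝ) < k := by exact_mod_cast hk
  have ht1 : 0 < t - 1 := by linarith
  obtain ⟨d, hd⟩ : ∃ d, tk = k + d := by
    apply Nat.exists_eq_add_of_le
    have : (k : ℝ) ≤ tk := by rw [htkeq]; nlinarith
    exact_mod_cast this
  have hdR : (d : ℝ) = (t - 1) * k := by
    have : (tk : ℝ) = k + d := by rw [hd]; push_cast; ring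
    linarith
  have hd0' : (0 : ℝ) < d := by rw [hdR]; positivity
  have hd0 : 0 < d := by exact_mod_cast hd0'
  have hss : Real.sqrt (t * (t - 1)) ^ 2 = t * (t - 1) := Real.sq_sqrt (by nlinarith)
  have hs0 : 0 ≤ Real.sqrt (t * (t - 1)) := Real.sqrt_nonneg _
  set s := Real.sqrt (t * (t - 1)) with hs
  have hδs : δ * t < s := by
    have : s = Real.sqrt ((t - 1) / t) * t := by
      rw [hs, show t * (t - 1) = (t - 1) / t * t ^ 2 by field_simp,
        Real.sqrt_mul (by positivity), Real.sqrt_sq (by linarith)]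
    rw [this]
    exact mul_lt_mul_of_pos_right hδ (by linarith)
  have hs1 : t - 1 ≤ s := by nlinarith
  have hs2 : 2 * s < 2 * t - 1 := by nlinarith
  have hν0 : 0 ≤ ν := by linarith
  have hν1 : ν ≤ 1 := by linarith
  have hν2 : ν ^ 2 = (t - 1) * (2 * t - 1 - 2 * s) := by
    rw [hν]; linear_combination hss
  have hcc : δ * ν ^ 2 / (2 * (t - 1)) = δ * (2 * t - 1 - 2 * s) / 2 := by
    rw [hν2]; field_simp
  have hlt : δ * ν ^ 2 / (2 * (t - 1)) < ν * (1 - ν) - δ * (0.5 - ν + ν ^ 2) := by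
    have e : ν * (1 - ν) - δ * (0.5 - ν + ν ^ 2) - δ * ν ^ 2 / (2 * (t - 1))
        = (s - δ * t) * (2 * t - 1 - 2 * s) := by
      rw [hcc, show ν * (1 - ν) = ν - ν ^ 2 by ring, hν2, hν]
      linear_combination (2 : ℝ) * hss
    have : 0 < (s - δ * t) * (2 * t - 1 - 2 * s) := mul_pos (by linarith) (by linarith)
    linarith
  have hc0 : 0 ≤ δ * ν ^ 2 / (2 * (t - 1)) := by positivity
  have haa : 0 < a := by rw [ha]; exact Real.sqrt_pos.2 (by linarith)
  have ha2 : a ^ 2 = ν * (1 - ν) - δ * (0.5 - ν + ν ^ 2) := by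
    rw [ha]; exact Real.sq_sqrt (by linarith)
  have hc2 : c ^ 2 = δ * ν ^ 2 / (2 * (t - 1)) := by
    rw [hc]; exact Real.sq_sqrt hc0
  have hcn : 0 ≤ c := by rw [hc]; exact Real.sqrt_nonneg _
  have hca : c < a := by
    rw [hc, ha]; exact Real.sqrt_lt_sqrt hc0 hlt
  refine ⟨by rw [hρ, div_lt_one haa]; exact hca, ?_⟩
  intro h S hS
  rw [hd] at hRIP
  obtain ⟨X, hX, hq⟩ := core k d hd0 A δ ν hδ0 hν0 hν1 hRIP h S hS
  refine hX.trans ?_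
  have hL0 : 0 ≤ l1 (proj Sᶜ h) := Finset.sum_nonneg fun _ _ => abs_nonneg _
  have hH0 := l2_nonneg (A.mulVec h)
  have hb0 : 0 ≤ b := by
    rw [hb]; exact mul_nonneg (mul_nonneg hν0 (by linarith)) (Real.sqrt_nonneg _)
  rw [← hb, show (1 / 2 : ℝ) = 0.5 by norm_num, ← ha2] at hq
  generalize l1 (proj Sᶜ h) = L at *
  generalize l2 (A.mulVec h) = H at *
  have hsk : 0 < Real.sqrt k := Real.sqrt_pos.2 hk'
  have hsk2 : Real.sqrt k ^ 2 = k := Real.sq_sqrt hk'.le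
  set p := ρ / Real.sqrt k * L with hp
  set q := τ / Real.sqrt k * H with hq'
  have hp0 : 0 ≤ p := by rw [hp, hρ]; positivity
  have hq0 : 0 ≤ q := by rw [hq', hτ]; positivity
  have hp2 : a ^ 2 * p ^ 2 = δ * ν ^ 2 / 2 * (L ^ 2 / d) := by
    have : a ^ 2 * p ^ 2 = c ^ 2 * L ^ 2 / k := by
      rw [eq_div_iff hk'.ne', hp, hρ]
      field_simp
      rw [hsk2]; ring
    rw [this, hc2, hdR]; field_simp
  have hq2 : a ^ 2 * q = b * H := by
    rw [hq', hτ]; field_simp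
  rw [← hp2, ← hq2] at hq
  have hfin : X ^ 2 ≤ p ^ 2 + q * X := by
    have : a ^ 2 * X ^ 2 ≤ a ^ 2 * (p ^ 2 + q * X) := by linarith
    exact le_of_mul_le_mul_left this (by positivity)
  by_contra hcon
  rw [not_le] at hcon
  have f1 : 0 < (X - q - p) * (X + p) := mul_pos (by linarith) (by linarith)
  have f2 : 0 ≤ q * p := mul_nonneg hq0 hp0
  linarith [show X ^ 2 - q * X - p ^ 2 = (X - q - p) * (X + p) + q * p by ring]
end
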